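/- arXiv:2005.13998 — 8 statements merged into one kernel-verified Lean document; each statement's English description precedes it below -/
import Mathlib

section
/- Let (A, τ) be a non-commutative probability space and let B, C be norm-closed unital *-subalgebras of A, both containing a norm-closed unital *-subalgebra A_0, with conditional expectations E_B, E_C, E_0 onto B, C, A_0 respectively. Assume the tower property E_0 ∘ E_B = E_0 and the independence property E_B ∘ E_C = E_0. Then for every x ∈ C and every y ∈ B one has E_0(y* x* x y) = E_0(y* E_0(x* x) y), and consequently ‖x y‖₂² = τ(y* E_0(x* x) y). -/
open scoped ComplexOrder

/-- A faithful tracial state on a unital C*-algebra. -/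
structure IsTracialState {A : Type*} [CStarAlgebra A] (τ : A →ₗ[ℂ] ℂ) : Prop where
  map_one : τ 1 = 1
  pos : ∀ x : A, 0 ≤ τ (star x * x)
  tracial : ∀ x y : A, τ (x * y) = τ (y * x)
  bounded : ∀ x : A, ‖τ x‖ ≤ ‖x‖
  faithful : ∀ x : A, τ (star x * x) = 0 → x = 0

/-- A (trace-preserving) conditional expectation onto a subset `B` of `A`. -/
structure IsCondExp {A : Type*} [CStarAlgebra A] (τ : A →ₗ[ℂ] ℂ) (B : Set A)
    (E : A →ₗ[ℂ] A) : Prop where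
  mem_range : ∀ x, E x ∈ B
  map_of_mem : ∀ b ∈ B, E b = b
  bimodule : ∀ a ∈ B, ∀ c ∈ B, ∀ x, E (a * x * c) = a * E x * c
  map_star : ∀ x, E (star x) = star (E x)
  contractive : ∀ x, ‖E x‖ ≤ ‖x‖
  trace_eq : ∀ x, τ (E x) = τ x

/-- If `B` and `C` are independent over `A₀` (i.e. `E_B ∘ E_C = E₀`) and the tower property
`E₀ ∘ E_B = E₀` holds, then for `x ∈ C`, `y ∈ B` one has
`E₀(y* x* x y) = E₀(y* E₀(x* x) y)` and `‖x y‖₂² = τ(y* E₀(x* x) y)`. -/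
theorem condExp_covariance_of_indep {A : Type*} [CStarAlgebra A]
    (τ : A →ₗ[ℂ] ℂ) (hτ : IsTracialState τ)
    (B C A0 : StarSubalgebra ℂ A)
    (hB : IsClosed (B : Set A)) (hC : IsClosed (C : Set A)) (hA0 : IsClosed (A0 : Set A))
    (hA0B : (A0 : Set A) ⊆ B) (hA0C : (A0 : Set A) ⊆ C)
    (EB EC E0 : A →ₗ[ℂ] A)
    (hEB : IsCondExp τ (B : Set A) EB) (hEC : IsCondExp τ (C : Set A) EC)
    (hE0 : IsCondExp τ (A0 : Set A) E0)
    (tower : ∀ x, E0 (EB x) = E0 x)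
    (indep : ∀ x, EB (EC x) = E0 x) :
    ∀ x ∈ C, ∀ y ∈ B,
      E0 (star y * (star x * x) * y) = E0 (star y * E0 (star x * x) * y) ∧
      τ (star (x * y) * (x * y)) = τ (star y * E0 (star x * x) * y) := by
  intro x hx y hy
  have hxx : star x * x ∈ (C : Set A) := mul_mem (S := StarSubalgebra ℂ A) (s := C) (star_mem hx) hx
  have h1 : EB (star x * x) = E0 (star x * x) := by
    rw [← indep, hEC.map_of_mem _ hxx]
  have h2 : EB (star y * (star x * x) * y) = star y * E0 (star x * x) * y := by
    rw [hEB.bimodule _ (star_mem hy) _ hy, h1]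
  refine ⟨by rw [← h2, tower], ?_⟩
  rw [← h2, hEB.trace_eq, star_mul]
  simp only [mul_assoc]
end

section
/- Let (A, τ, S, (A_I), (E_I)) be an A_0-valued white noise and let (c_t)_{t≥0} be a centred, norm-continuous additive cocycle for the shift S. Then for every x ∈ A_0 and every t ≥ 0 one has E_0(c_t* x c_t) = t · E_0(c_1* x c_1). -/
open scoped ComplexOrder

/-- An `A₀`-valued white noise `(A, τ, S, (A_I), (E_I))`.  The filtration is indexed by
closed intervals `[a, b]` of `ℝ` with (possibly infinite) endpoints `a b : EReal`. -/
structure WhiteNoise (A : Type*) [CStarAlgebra A] (τ : A →ₗ[ℂ] ℂ) where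
  tracial : IsTracialState τ
  /-- the filtration algebra `A_{[a,b]}` -/
  alg : EReal → EReal → StarSubalgebra ℂ A
  alg_isClosed : ∀ a b, IsClosed (alg a b : Set A)
  alg_mono : ∀ a b a' b' : EReal, a' ≤ a → b ≤ b' → (alg a b : Set A) ⊆ alg a' b'
  /-- the distinguished subalgebra `A₀` -/
  A0 : StarSubalgebra ℂ A
  A0_isClosed : IsClosed (A0 : Set A)
  A0_le : ∀ a b, (A0 : Set A) ⊆ alg a b
  /-- the conditional expectation `E_{[a,b]}` onto `A_{[a,b]}` -/
  E : EReal → EReal → (A →ₗ[ℂ] A)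
  /-- the conditional expectation `E₀` onto `A₀` -/
  E0 : A →ₗ[ℂ] A
  E_condExp : ∀ a b, IsCondExp τ (alg a b) (E a b)
  E0_condExp : IsCondExp τ A0 E0
  /-- the white noise shift: a one-parameter group of trace-preserving `*`-automorphisms -/
  S : ℝ → (A ≃⋆ₐ[ℂ] A)
  S_zero : ∀ x, S 0 x = x
  S_add : ∀ s t x, S (s + t) x = S s (S t x)
  S_trace : ∀ t x, τ (S t x) = τ x
  S_alg : ∀ (t : ℝ) (a b : EReal),
    (S t) '' (alg a b : Set A) = (alg (a + (t : EReal)) (b + (t : EReal)) : Set A)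
  S_fix : ∀ t, ∀ a ∈ A0, S t a = a
  E0_S : ∀ t x, E0 (S t x) = E0 x
  /-- independence over `A₀`: `E_I ∘ E_J = E₀` whenever the interiors of `I`, `J` are disjoint -/
  indep : ∀ a b c d : EReal,
    (∀ x : ℝ, ¬((a < (x : EReal) ∧ (x : EReal) < b) ∧ (c < (x : EReal) ∧ (x : EReal) < d))) →
    ∀ y, E a b (E c d y) = E0 y
  /-- the tower property `E₀ ∘ E_I = E₀` -/
  tower : ∀ (a b : EReal) (y : A), E0 (E a b y) = E0 y

/-- A continuous additive function on the half-line is linear. -/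
theorem additive_halfline_linear {A : Type*} [CStarAlgebra A] (f : ℝ → A)
    (hadd : ∀ s t : ℝ, 0 ≤ s → 0 ≤ t → f (s + t) = f s + f t)
    (hf : ContinuousOn f (Set.Ici 0)) (t : ℝ) (ht : 0 ≤ t) : f t = (t : ℂ) • f 1 := by
  have h0 : f 0 = 0 := by simpa using hadd 0 0 le_rfl le_rfl
  have key : ∀ a b : ℝ, 0 ≤ a → 0 ≤ b →
      f (max (a - b) 0) - f (max (-(a - b)) 0) = f a - f b := by
    intro a b ha hb
    have h1 := hadd (max (a - b) 0) b (le_max_right _ _) hb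
    have h2 := hadd (max (-(a - b)) 0) a (le_max_right _ _) ha
    have e : max (a - b) 0 + b = max (-(a - b)) 0 + a := by
      rcases le_total 0 (a - b) with h | h
      · rw [max_eq_left h, max_eq_right (by linarith)]; ring
      · rw [max_eq_right h, max_eq_left (by linarith)]; ring
    rw [e, h2] at h1
    rw [sub_eq_sub_iff_add_eq_add, ← h1, add_comm]
  have hm : ∀ r : ℝ, max r 0 - max (-r) 0 = r := by
    intro r
    rcases le_total 0 r with h | h
    · rw [max_eq_left h, max_eq_right (by linarith)]; ring
    · rw [max_eq_right h, max_eq_left (by linarith)]; ring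
  let g : ℝ →+ A := AddMonoidHom.mk' (fun r => f (max r 0) - f (max (-r) 0)) (by
    intro r s
    have h := key (max r 0 + max s 0) (max (-r) 0 + max (-s) 0) (by positivity) (by positivity)
    have e : max r 0 + max s 0 - (max (-r) 0 + max (-s) 0) = r + s := by
      linarith [hm r, hm s]
    rw [e, hadd _ _ (le_max_right _ _) (le_max_right _ _),
      hadd _ _ (le_max_right _ _) (le_max_right _ _)] at h
    simp only [h]
    abel)
  have hg : Continuous g := by
    have c1 : Continuous (fun r : ℝ => f (max r 0)) :=
      hf.comp_continuous (by fun_prop) (fun r => Set.mem_Ici.2 (le_max_right _ _))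
    have c2 : Continuous (fun r : ℝ => f (max (-r) 0)) :=
      hf.comp_continuous (by fun_prop) (fun r => Set.mem_Ici.2 (le_max_right _ _))
    exact c1.sub c2
  have hgf : ∀ r : ℝ, 0 ≤ r → g r = f r := by
    intro r hr
    change f (max r 0) - f (max (-r) 0) = f r
    rw [max_eq_left hr, max_eq_right (by linarith), h0, sub_zero]
  have := map_real_smul g hg t 1
  rw [smul_eq_mul, mul_one, hgf t ht, hgf 1 zero_le_one] at this
  rw [this]
  exact (Complex.coe_smul t (f 1)).symm

/-- For a centred norm-continuous additive cocycle `c` of a white noise,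
`E₀(c_t* x c_t) = t • E₀(c_1* x c_1)` for all `x ∈ A₀` and `t ≥ 0`. -/
theorem centred_additive_cocycle_covariance {A : Type*} [CStarAlgebra A]
    (τ : A →ₗ[ℂ] ℂ) (W : WhiteNoise A τ) (c : ℝ → A)
    (hadapt : ∀ t : ℝ, 0 ≤ t → c t ∈ W.alg 0 (t : EReal))
    (hcoc : ∀ s t : ℝ, 0 ≤ s → 0 ≤ t → c (s + t) = W.S t (c s) + c t)
    (hcentred : ∀ t : ℝ, 0 ≤ t → W.E0 (c t) = 0)
    (hcont : ContinuousOn c (Set.Ici 0)) :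
    ∀ x ∈ W.A0, ∀ t : ℝ, 0 ≤ t →
      W.E0 (star (c t) * x * c t) = (t : ℂ) • W.E0 (star (c 1) * x * c 1) := by
  intro x hx t ht
  have hE0c : Continuous W.E0 :=
    AddMonoidHomClass.continuous_of_bound W.E0 1
      (fun y => by simpa using W.E0_condExp.contractive y)
  refine additive_halfline_linear (fun t => W.E0 (star (c t) * x * c t)) ?_ ?_ t ht
  · intro s t hs ht
    -- the increment lives in the algebra of `[t, s + t]`
    have hmem : W.S t (c s) ∈ W.alg (t : EReal) ((s : EReal) + t) := by
      have h : W.S t (c s) ∈ (W.S t) '' (W.alg 0 (s : EReal) : Set A) :=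
        ⟨_, hadapt s hs, rfl⟩
      rw [W.S_alg, zero_add] at h
      exact h
    have hC := W.E_condExp (t : EReal) ((s : EReal) + t)
    have hz : W.E (t : EReal) ((s : EReal) + t) (c t) = 0 := by
      rw [← (W.E_condExp 0 (t : EReal)).map_of_mem _ (hadapt t ht), W.indep, hcentred t ht]
      rintro r ⟨⟨h1, -⟩, ⟨-, h2⟩⟩
      exact lt_asymm h1 h2
    have hxm : x ∈ W.alg (t : EReal) ((s : EReal) + t) := W.A0_le _ _ hx
    have hone : (1 : A) ∈ W.alg (t : EReal) ((s : EReal) + t) := one_mem _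
    have cross1 : W.E0 (star (W.S t (c s)) * x * c t) = 0 := by
      rw [← W.tower (t : EReal) ((s : EReal) + t)]
      have h := hC.bimodule _ (mul_mem (star_mem hmem) hxm) 1 hone (c t)
      rw [hz, mul_one, mul_one, mul_zero] at h
      rw [h, map_zero]
    have cross2 : W.E0 (star (c t) * x * W.S t (c s)) = 0 := by
      rw [← W.tower (t : EReal) ((s : EReal) + t)]
      have h := hC.bimodule 1 hone _ (mul_mem hxm hmem) (star (c t))
      rw [hC.map_star, hz, one_mul, star_zero, mul_zero, zero_mul, ← mul_assoc] at h
      rw [h, map_zero]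
    have diag : W.E0 (star (W.S t (c s)) * x * W.S t (c s)) = W.E0 (star (c s) * x * c s) := by
      rw [← W.E0_S t (star (c s) * x * c s), map_mul (W.S t), map_mul (W.S t), map_star (W.S t), W.S_fix t x hx]
    simp only [hcoc s t hs ht, star_add, add_mul, mul_add, map_add, cross1, cross2, diag]
    abel
  · exact hE0c.comp_continuousOn ((hcont.star.mul continuousOn_const).mul hcont)
end

section
/- Let (A, τ, S, (A_I), (E_I)) be an A_0-valued white noise and let (u_t)_{t≥0} be a unitary cocycle for the shift S. Then E_0(u_{s+t}) = E_0(u_s) E_0(u_t) for all s, t ≥ 0; in particular t ↦ E_0(u_t) is a one-parameter semigroup of elements of A_0 of norm at most 1, acting by left multiplication as a semigroup of contractions. -/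
open scoped ComplexOrder

/-- For a unitary cocycle `u` for the shift of a white noise, `t ↦ E₀(u_t)` is a
one-parameter semigroup of elements of `A₀` of norm at most `1`, acting by left
multiplication as a semigroup of contractions. -/
theorem unitary_cocycle_condExp_semigroup {A : Type*} [CStarAlgebra A]
    (τ : A →ₗ[ℂ] ℂ) (W : WhiteNoise A τ) (u : ℝ → A)
    (hunit : ∀ t : ℝ, 0 ≤ t → star (u t) * u t = 1 ∧ u t * star (u t) = 1)
    (hadapt : ∀ t : ℝ, 0 ≤ t → u t ∈ W.alg 0 (t : EReal))
    (hcoc : ∀ s t : ℝ, 0 ≤ s → 0 ≤ t → u (s + t) = W.S t (u s) * u t) :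
    (∀ s t : ℝ, 0 ≤ s → 0 ≤ t → W.E0 (u (s + t)) = W.E0 (u s) * W.E0 (u t)) ∧
    (∀ t : ℝ, 0 ≤ t → W.E0 (u t) ∈ W.A0 ∧ ‖W.E0 (u t)‖ ≤ 1 ∧
      ∀ y : A, ‖W.E0 (u t) * y‖ ≤ ‖y‖) := by
  have hE0 := W.E0_condExp
  refine ⟨?_, ?_⟩
  · intro s t hs ht
    have hx : W.S t (u s) ∈ W.alg (0 + (t : EReal)) ((s : EReal) + (t : EReal)) := by
      have h : W.S t (u s) ∈ (W.S t) '' (W.alg 0 (s : EReal) : Set A) :=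
        ⟨u s, hadapt s hs, rfl⟩
      rw [W.S_alg] at h
      exact h
    have hEx : W.E 0 (t : EReal) (W.S t (u s)) = W.E0 (u s) := by
      have h1 := W.indep 0 (t : EReal) (0 + (t : EReal)) ((s : EReal) + (t : EReal))
        (by
          rintro x ⟨⟨_, h2⟩, h3, _⟩
          rw [zero_add] at h3
          exact lt_asymm h2 h3) (W.S t (u s))
      rw [(W.E_condExp _ _).map_of_mem _ hx, W.E0_S] at h1
      exact h1
    have hmul : W.E 0 (t : EReal) (W.S t (u s) * u t) = W.E0 (u s) * u t := by
      have h1 := (W.E_condExp 0 (t : EReal)).bimodule 1 (one_mem (W.alg 0 (t : EReal)))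
        (u t) (hadapt t ht) (W.S t (u s))
      rwa [one_mul, one_mul, hEx] at h1
    have h0 := hE0.bimodule (W.E0 (u s)) (hE0.mem_range _) 1 (one_mem W.A0) (u t)
    rw [mul_one, mul_one] at h0
    rw [hcoc s t hs ht, ← W.tower 0 (t : EReal), hmul, h0]
  · intro t ht
    have hn : ‖W.E0 (u t)‖ ≤ 1 := by
      refine (hE0.contractive _).trans ?_
      haveI : Nontrivial A := by
        refine ⟨⟨0, 1, fun h => ?_⟩⟩
        have h1 := W.tracial.map_one
        rw [← h, map_zero] at h1
        exact zero_ne_one h1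
      have h2 := CStarRing.norm_star_mul_self (x := u t)
      rw [(hunit t ht).1, CStarRing.norm_one] at h2
      nlinarith [norm_nonneg (u t)]
    refine ⟨hE0.mem_range _, hn, fun y => ?_⟩
    calc ‖W.E0 (u t) * y‖ ≤ ‖W.E0 (u t)‖ * ‖y‖ := norm_mul_le _ _
      _ ≤ 1 * ‖y‖ := by gcongr
      _ = ‖y‖ := one_mul _
end

section
/- Let (A, τ, S, (A_I), (E_I)) be an A_0-valued white noise and let (u_t)_{t≥0} be a unitary cocycle for the shift S. Define R_t : A_0 → A by R_t(x) = E_0(u_t* S_t(x) u_t) for t ≥ 0 and x ∈ A_0. Then R_t(x) ∈ A_0, R_t(1) = 1, R_0 is the identity on A_0, and R_{s+t}(x) = R_s(R_t(x)) for all s, t ≥ 0 and all x ∈ A_0; that is, the compressions of the coupled dynamics Ad u_t ∘ S_t to A_0 form a one-parameter semigroup (the Markovian semigroup of the coupling). -/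
open scoped ComplexOrder

/-- The compressions `R_t(x) = E₀(u_t* S_t(x) u_t)` of the coupled dynamics `Ad u_t ∘ S_t`
to `A₀` form a one-parameter semigroup: the Markovian semigroup of the coupling. -/
theorem markov_semigroup_of_coupling {A : Type*} [CStarAlgebra A]
    (τ : A →ₗ[ℂ] ℂ) (W : WhiteNoise A τ) (u : ℝ → A)
    (hunit : ∀ t : ℝ, 0 ≤ t → star (u t) * u t = 1 ∧ u t * star (u t) = 1)
    (hadapt : ∀ t : ℝ, 0 ≤ t → u t ∈ W.alg 0 (t : EReal))
    (hcoc : ∀ s t : ℝ, 0 ≤ s → 0 ≤ t → u (s + t) = W.S t (u s) * u t)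
    (R : ℝ → A → A)
    (hR : ∀ (t : ℝ) (x : A), R t x = W.E0 (star (u t) * W.S t x * u t)) :
    (∀ t : ℝ, 0 ≤ t → ∀ x ∈ W.A0, R t x ∈ W.A0) ∧
    (∀ t : ℝ, 0 ≤ t → R t 1 = 1) ∧
    (∀ x ∈ W.A0, R 0 x = x) ∧
    (∀ s t : ℝ, 0 ≤ s → 0 ≤ t → ∀ x ∈ W.A0, R (s + t) x = R s (R t x)) := by
  have h1 : ∀ t : ℝ, 0 ≤ t → ∀ x ∈ W.A0, R t x ∈ W.A0 := by
    intro t _ x _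
    rw [hR]
    exact W.E0_condExp.mem_range _
  refine ⟨h1, ?_, ?_, ?_⟩
  · intro t ht
    rw [hR, map_one, mul_one, (hunit t ht).1]
    exact W.E0_condExp.map_of_mem 1 (one_mem W.A0)
  · intro x hx
    have h0 : u 0 = 1 := by
      have h := hcoc 0 0 le_rfl le_rfl
      rw [add_zero, W.S_zero] at h
      calc u 0 = (star (u 0) * u 0) * u 0 := by rw [(hunit 0 le_rfl).1, one_mul]
        _ = star (u 0) * u 0 := by rw [mul_assoc, ← h]
        _ = 1 := (hunit 0 le_rfl).1
    rw [hR, h0, W.S_zero, star_one, one_mul, mul_one]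
    exact W.E0_condExp.map_of_mem x hx
  · intro s t hs ht x hx
    have key : W.E 0 (s : EReal) (W.S s (star (u t) * x * u t)) = R t x := by
      have hy : star (u t) * x * u t ∈ W.alg 0 (t : EReal) :=
        mul_mem (mul_mem (star_mem (hadapt t ht)) (W.A0_le _ _ hx)) (hadapt t ht)
      have hm : W.S s (star (u t) * x * u t) ∈
          (W.alg (0 + (s : EReal)) ((t : EReal) + (s : EReal)) : Set A) := by
        rw [← W.S_alg]
        exact ⟨_, hy, rfl⟩
      rw [← (W.E_condExp _ _).map_of_mem _ hm, W.indep, W.E0_S, hR, W.S_fix t x hx]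
      rintro r ⟨⟨_, h⟩, h', _⟩
      rw [zero_add] at h'
      exact lt_asymm h h'
    have hRA := h1 t ht x hx
    rw [hR s, W.S_fix s _ hRA, ← key,
      ← (W.E_condExp 0 (s : EReal)).bimodule _ (star_mem (hadapt s hs)) _ (hadapt s hs),
      W.tower, hR, add_comm s t, hcoc t s ht hs, W.S_fix _ x hx]
    simp only [map_mul, map_star, star_mul, W.S_fix s x hx, mul_assoc]
end

section
/- Let (A, τ, S, (A_I), (E_I)) be an A_0-valued white noise and let (c_t)_{t≥0} be a centred, norm-continuous additive cocycle for the shift S. Let 0 = s_0 < s_1 < … < s_n = t be a partition of [0, t] and let y_j ∈ A_{[0, s_j]} for j = 0, …, n−1. Set I := Σ_{j=0}^{n−1} (c_{s_{j+1}} − c_{s_j}) y_j. Then E_0(I* I) = Σ_{j=0}^{n−1} (s_{j+1} − s_j) · E_0(y_j* E_0(c_1* c_1) y_j), and consequently ‖I‖₂² = Σ_{j=0}^{n−1} (s_{j+1} − s_j) · τ(y_j* E_0(c_1* c_1) y_j) (the Itô isometry for simple adapted processes). -/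
open scoped ComplexOrder

/-- An additive map on `[0, ∞)` that is continuous there is linear. -/
lemma additive_halfline_linear_s8 {A : Type*} [NormedAddCommGroup A] [NormedSpace ℝ A]
    (g : ℝ → A) (hadd : ∀ s t : ℝ, 0 ≤ s → 0 ≤ t → g (s + t) = g s + g t)
    (hc : ContinuousOn g (Set.Ici 0)) (h : ℝ) (hh : 0 ≤ h) : g h = h • g 1 := by
  have h0 : g 0 = 0 := by
    have := hadd 0 0 le_rfl le_rfl
    simpa using this
  have hcomp : ∀ f : ℝ → ℝ, Continuous f → Continuous (fun x => g (max (f x) 0)) := by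
    intro f hf
    exact hc.comp_continuous (by fun_prop) (fun x => Set.mem_Ici.2 (le_max_right _ _))
  let G : ℝ →+ A :=
    { toFun := fun x => g (max x 0) - g (max (-x) 0)
      map_zero' := by simp
      map_add' := by
        intro x y
        have key : g (max (x + y) 0) + (g (max (-x) 0) + g (max (-y) 0))
            = g (max (-(x + y)) 0) + (g (max x 0) + g (max y 0)) := by
          rw [← hadd _ _ (le_max_right _ _) (le_max_right _ _),
            ← hadd _ _ (le_max_right _ _) (by positivity),
            ← hadd _ _ (le_max_right _ _) (le_max_right _ _),
            ← hadd _ _ (le_max_right _ _) (by positivity)]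
          congr 1
          have e : ∀ z : ℝ, max z 0 = max (-z) 0 + z := by
            intro z
            rcases le_total z 0 with hz | hz
            · rw [max_eq_right hz, max_eq_left (by linarith)]; ring
            · rw [max_eq_left hz, max_eq_right (by linarith)]; ring
          rw [e (x + y), e x, e y]
          ring
        have e2 : g (max (x + y) 0) = g (max (-(x + y)) 0) + (g (max x 0) + g (max y 0))
            - (g (max (-x) 0) + g (max (-y) 0)) := eq_sub_of_add_eq key
        rw [e2]
        abel }
  have hG : Continuous G :=
    (hcomp (fun x => x) continuous_id).sub (hcomp (fun x => -x) continuous_neg)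
  have hpos : ∀ x : ℝ, 0 ≤ x → G x = g x := by
    intro x hx
    change g (max x 0) - g (max (-x) 0) = g x
    rw [max_eq_left hx, max_eq_right (by linarith), h0, sub_zero]
  have := map_real_smul G hG h 1
  rw [smul_eq_mul, mul_one, hpos h hh, hpos 1 zero_le_one] at this
  exact this

/-- Independence in factorised form. -/
lemma WhiteNoise.E0_mul_mul {A : Type*} [CStarAlgebra A] {τ : A →ₗ[ℂ] ℂ} (W : WhiteNoise A τ)
    (u v : EReal) (a b x : A) (ha : a ∈ W.alg 0 u) (hb : b ∈ W.alg 0 u) (hx : x ∈ W.alg u v) :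
    W.E0 (a * x * b) = W.E0 (a * W.E0 x * b) := by
  have h1 : W.E 0 u x = W.E0 x := by
    have := W.indep 0 u u v (by
      rintro z ⟨⟨_, h1⟩, h2, _⟩
      exact lt_asymm h1 h2) x
    rwa [(W.E_condExp u v).map_of_mem x hx] at this
  rw [← W.tower 0 u (a * x * b), (W.E_condExp 0 u).bimodule a ha b hb, h1]

/-- The Itô isometry for simple adapted processes: for a centred norm-continuous additive
cocycle `c`, a partition `0 = s_0 < … < s_n = t` and adapted `y_j ∈ A_{[0, s_j]}`, the
stochastic integral `I = Σ_j (c_{s_{j+1}} - c_{s_j}) y_j` satisfies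
`E₀(I* I) = Σ_j (s_{j+1} - s_j) • E₀(y_j* E₀(c_1* c_1) y_j)` and
`‖I‖₂² = Σ_j (s_{j+1} - s_j) τ(y_j* E₀(c_1* c_1) y_j)`. -/
theorem ito_isometry_simple_processes {A : Type*} [CStarAlgebra A]
    (τ : A →ₗ[ℂ] ℂ) (W : WhiteNoise A τ) (c : ℝ → A)
    (hadapt : ∀ t : ℝ, 0 ≤ t → c t ∈ W.alg 0 (t : EReal))
    (hcoc : ∀ s t : ℝ, 0 ≤ s → 0 ≤ t → c (s + t) = W.S t (c s) + c t)
    (hcentred : ∀ t : ℝ, 0 ≤ t → W.E0 (c t) = 0)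
    (hcont : ContinuousOn c (Set.Ici 0))
    (t : ℝ) (ht : 0 ≤ t)
    (n : ℕ) (hn : 1 ≤ n) (s : ℕ → ℝ)
    (hs0 : s 0 = 0) (hsn : s n = t)
    (hmono : ∀ j < n, s j < s (j + 1))
    (y : ℕ → A) (hy : ∀ j < n, y j ∈ W.alg 0 ((s j : ℝ) : EReal))
    (I : A) (hI : I = ∑ j ∈ Finset.range n, (c (s (j + 1)) - c (s j)) * y j) :
    W.E0 (star I * I) =
      ∑ j ∈ Finset.range n, ((s (j + 1) - s j : ℝ) : ℂ) •
        W.E0 (star (y j) * W.E0 (star (c 1) * c 1) * y j) ∧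
    τ (star I * I) =
      ∑ j ∈ Finset.range n, ((s (j + 1) - s j : ℝ) : ℂ) *
        τ (star (y j) * W.E0 (star (c 1) * c 1) * y j) := by
  have hE0 := W.E0_condExp
  -- increments
  have hinc : ∀ u h : ℝ, 0 ≤ u → 0 ≤ h →
      W.S u (c h) ∈ W.alg (u : EReal) ((h + u : ℝ) : EReal) := by
    intro u h hu hh
    have h1 : W.S u (c h) ∈ (W.S u) '' (W.alg 0 (h : EReal) : Set A) :=
      ⟨_, hadapt h hh, rfl⟩
    rw [W.S_alg] at h1
    simpa using h1
  have hinc0 : ∀ u h : ℝ, 0 ≤ h → W.E0 (W.S u (c h)) = 0 := by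
    intro u h hh
    rw [W.E0_S, hcentred h hh]
  have hstar0 : ∀ x, W.E0 x = 0 → W.E0 (star x) = 0 := by
    intro x hx
    rw [hE0.map_star, hx, star_zero]
  -- cross terms vanish
  have hcross : ∀ (u h : ℝ), 0 ≤ u → 0 ≤ h → ∀ a b : A, a ∈ W.alg 0 (u : EReal) →
      b ∈ W.alg 0 (u : EReal) → W.E0 (a * (W.S u (c h)) * b) = 0 := by
    intro u h hu hh a b ha hb
    rw [W.E0_mul_mul _ _ a b _ ha hb (hinc u h hu hh), hinc0 u h hh]
    simp
  -- the expansion of a square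
  have hexp : ∀ (u h : ℝ), 0 ≤ u → 0 ≤ h → ∀ a b : A, a ∈ W.alg 0 (u : EReal) →
      b ∈ W.alg 0 (u : EReal) →
      W.E0 (star (a + W.S u (c h) * b) * (a + W.S u (c h) * b)) =
        W.E0 (star a * a) + W.E0 (star b * W.E0 (star (c h) * c h) * b) := by
    intro u h hu hh a b ha hb
    have e1 : W.E0 (star a * W.S u (c h) * b) = 0 :=
      hcross u h hu hh _ _ (star_mem ha) hb
    have e2 : W.E0 (star b * star (W.S u (c h)) * a) = 0 := by
      have := hstar0 _ e1
      simpa [mul_assoc] using this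
    have e3 : W.E0 (star b * (star (W.S u (c h)) * W.S u (c h)) * b) =
        W.E0 (star b * W.E0 (star (c h) * c h) * b) := by
      rw [W.E0_mul_mul _ _ _ _ _ (star_mem hb) hb
        (mul_mem (star_mem (hinc u h hu hh)) (hinc u h hu hh)),
        ← map_star, ← map_mul, W.E0_S]
    have e4 : star (a + W.S u (c h) * b) * (a + W.S u (c h) * b) =
        star a * a + star a * W.S u (c h) * b + star b * star (W.S u (c h)) * a
          + star b * (star (W.S u (c h)) * W.S u (c h)) * b := by
      rw [star_add, star_mul]
      noncomm_ring
    rw [e4, map_add, map_add, map_add, e1, e2, e3]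
    simp
  -- quadratic variation is linear
  have hlin : ∀ h : ℝ, 0 ≤ h →
      W.E0 (star (c h) * c h) = (h : ℂ) • W.E0 (star (c 1) * c 1) := by
    intro h hh
    have hEc : Continuous W.E0 :=
      AddMonoidHomClass.continuous_of_bound W.E0 1
        (fun x => by simpa using hE0.contractive x)
    have := additive_halfline_linear_s8 (fun h => W.E0 (star (c h) * c h)) (by
      intro p q hp hq
      have := hexp q p hq hp (c q) 1 (hadapt q hq) (one_mem _)
      have e : W.E0 (W.E0 (star (c p) * c p)) = W.E0 (star (c p) * c p) :=
        hE0.map_of_mem _ (hE0.mem_range _)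
      simp only [mul_one, star_one, one_mul, e] at this
      change W.E0 (star (c (p + q)) * c (p + q)) = _
      rw [hcoc p q hp hq, add_comm (W.S q (c p)) (c q), this, add_comm])
      (hEc.comp_continuousOn (hcont.star.mul hcont)) h hh
    simpa using this
  have hsnn : ∀ j, j ≤ n → 0 ≤ s j := by
    intro j
    induction j with
    | zero => intro _; exact hs0.ge
    | succ k ih =>
      intro hk
      exact (ih (by omega)).trans (hmono k (by omega)).le
  have hd : ∀ j, j < n → c (s (j + 1)) - c (s j) = W.S (s j) (c (s (j + 1) - s j)) := by
    intro j hj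
    have := hcoc (s (j + 1) - s j) (s j) (sub_nonneg.2 (hmono j hj).le) (hsnn j hj.le)
    rw [sub_add_cancel] at this
    rw [this, add_sub_cancel_right]
  have hmain : ∀ m, m ≤ n →
      (∑ j ∈ Finset.range m, (c (s (j + 1)) - c (s j)) * y j) ∈ W.alg 0 ((s m : ℝ) : EReal) ∧
      W.E0 (star (∑ j ∈ Finset.range m, (c (s (j + 1)) - c (s j)) * y j) *
        (∑ j ∈ Finset.range m, (c (s (j + 1)) - c (s j)) * y j)) =
      ∑ j ∈ Finset.range m, ((s (j + 1) - s j : ℝ) : ℂ) •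
        W.E0 (star (y j) * W.E0 (star (c 1) * c 1) * y j) := by
    intro m
    induction m with
    | zero => intro _; simp
    | succ k ih =>
      intro hk
      obtain ⟨h1, h2⟩ := ih (by omega)
      have hkn : k < n := by omega
      have hle : ((s k : ℝ) : EReal) ≤ ((s (k + 1) : ℝ) : EReal) :=
        EReal.coe_le_coe_iff.2 (hmono k hkn).le
      have hup : ∀ x, x ∈ W.alg 0 ((s k : ℝ) : EReal) →
          x ∈ W.alg 0 ((s (k + 1) : ℝ) : EReal) :=
        fun x hx => W.alg_mono _ _ _ _ le_rfl hle hx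
      rw [Finset.sum_range_succ]
      refine ⟨add_mem (hup _ h1) (mul_mem (sub_mem (hadapt _ (hsnn _ hk))
        (hup _ (hadapt _ (hsnn _ hkn.le)))) (hup _ (hy k hkn))), ?_⟩
      have hh := sub_nonneg.2 (hmono k hkn).le
      rw [Finset.sum_range_succ, hd k hkn,
        hexp (s k) _ (hsnn _ hkn.le) hh _ _ h1 (hy k hkn), h2, hlin _ hh]
      simp only [mul_smul_comm, smul_mul_assoc, map_smul]
  have hfirst := (hmain n le_rfl).2
  rw [← hI] at hfirst
  refine ⟨hfirst, ?_⟩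
  rw [← hE0.trace_eq, hfirst, map_sum]
  refine Finset.sum_congr rfl fun j _ => ?_
  rw [map_smul, hE0.trace_eq, smul_eq_mul]
end

section
/- Let (A, τ, S, (A_I), (E_I)) be an A_0-valued white noise and let (b_t)_{t≥0} be a norm-continuous additive cocycle for the shift S which is differentiable at 0 in the C*-norm, i.e. the limit lim_{t→0+} b_t / t exists in A. Then the centred part of b vanishes identically: b_t = t · E_0(b_1) for all t ≥ 0, with E_0(b_1) ∈ A_0; that is, every differentiable additive cocycle is a drift. -/
open scoped ComplexOrder

open Filter Topology in
theorem additive_lin_aux {V : Type*} [NormedAddCommGroup V] [NormedSpace ℂ V]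
    (g : ℝ → V) (hg : ∀ s t : ℝ, 0 ≤ s → 0 ≤ t → g (s + t) = g s + g t) (L : V)
    (hL : Tendsto (fun t : ℝ => ((t : ℂ))⁻¹ • g t) (𝓝[>] 0) (𝓝 L)) :
    ∀ t : ℝ, 0 ≤ t → g t = (t : ℂ) • L := by
  have h0 : g 0 = 0 := by
    have := hg 0 0 le_rfl le_rfl
    simpa using this
  intro t ht
  rcases ht.eq_or_lt with rfl | ht
  · simp [h0]
  have hn : ∀ (s : ℝ), 0 ≤ s → ∀ n : ℕ, g (n * s) = (n : ℂ) • g s := by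
    intro s hs n
    induction n with
    | zero => simp [h0]
    | succ k ih =>
      have : ((k + 1 : ℕ) : ℝ) * s = k * s + s := by push_cast; ring
      rw [this, hg _ _ (by positivity) hs, ih]
      push_cast
      rw [add_smul, one_smul]
  have hlim : Tendsto (fun n : ℕ => t / ((n : ℝ) + 1)) atTop (𝓝[>] 0) := by
    rw [tendsto_nhdsWithin_iff]
    refine ⟨?_, Eventually.of_forall fun n => ?_⟩
    · have := (tendsto_one_div_add_atTop_nhds_zero_nat (𝕜 := ℝ)).const_mul t
      simpa [div_eq_mul_inv] using this
    · show 0 < t / ((n : ℝ) + 1)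
      positivity
  have h2 := (hL.comp hlim).const_smul (t : ℂ)
  refine tendsto_nhds_unique (Tendsto.congr (fun n => ?_) tendsto_const_nhds) h2
  have hpos : (0 : ℝ) < (n : ℝ) + 1 := by positivity
  have h3 := hn (t / ((n : ℝ) + 1)) (by positivity) (n + 1)
  have h4 : ((n + 1 : ℕ) : ℝ) * (t / ((n : ℝ) + 1)) = t := by
    push_cast; field_simp
  rw [h4] at h3
  simp only [Function.comp]
  rw [smul_smul, h3]
  congr 1
  have h5 : (t : ℂ) ≠ 0 := by exact_mod_cast ht.ne'
  have h6 : (n : ℂ) + 1 ≠ 0 := by exact_mod_cast hpos.ne'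
  push_cast
  field_simp

/-- Every additive cocycle which is differentiable at `0` in norm is a drift:
its centred part vanishes and `b_t = t • E₀(b_1)` with `E₀(b_1) ∈ A₀`. -/
theorem differentiable_additive_cocycle_is_drift {A : Type*} [CStarAlgebra A]
    (τ : A →ₗ[ℂ] ℂ) (W : WhiteNoise A τ) (b : ℝ → A)
    (hadapt : ∀ t : ℝ, 0 ≤ t → b t ∈ W.alg 0 (t : EReal))
    (hcoc : ∀ s t : ℝ, 0 ≤ s → 0 ≤ t → b (s + t) = W.S t (b s) + b t)
    (hcont : ContinuousOn b (Set.Ici 0))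
    (d' : A)
    (hdiff : Filter.Tendsto (fun t : ℝ => ((t : ℂ))⁻¹ • b t)
      (nhdsWithin 0 (Set.Ioi 0)) (nhds d')) :
    W.E0 (b 1) ∈ W.A0 ∧ ∀ t : ℝ, 0 ≤ t → b t = (t : ℂ) • W.E0 (b 1) := by
  refine ⟨W.E0_condExp.mem_range _, ?_⟩
  -- the drift part
  have hE0c : Continuous W.E0 :=
    (LinearMap.mkContinuous W.E0 1 (by
      intro x; simpa using W.E0_condExp.contractive x)).continuous
  have hgadd : ∀ s t : ℝ, 0 ≤ s → 0 ≤ t →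
      W.E0 (b (s + t)) = W.E0 (b s) + W.E0 (b t) := by
    intro s t hs ht
    rw [hcoc s t hs ht, map_add, W.E0_S]
  have hg := additive_lin_aux (fun t => W.E0 (b t)) hgadd (W.E0 d') (by
    have := (hE0c.tendsto d').comp hdiff
    refine this.congr fun t => ?_
    simp [Function.comp])
  have hL : W.E0 (b 1) = W.E0 d' := by simpa using hg 1 zero_le_one
  have hE0mem : ∀ x, W.E0 x ∈ W.A0 := W.E0_condExp.mem_range
  have hE0idem : ∀ x, W.E0 (W.E0 x) = W.E0 x := fun x => W.E0_condExp.map_of_mem _ (hE0mem x)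
  -- the centred part
  obtain ⟨c, hc⟩ : ∃ c : ℝ → A, ∀ t, c t = b t - W.E0 (b t) := ⟨_, fun _ => rfl⟩
  have hc0 : ∀ t, W.E0 (c t) = 0 := by
    intro t; rw [hc, map_sub, hE0idem, sub_self]
  have hcad : ∀ t : ℝ, 0 ≤ t → c t ∈ W.alg 0 (t : EReal) := by
    intro t ht
    rw [hc]
    exact sub_mem (hadapt t ht) (W.A0_le _ _ (hE0mem _))
  have hccoc : ∀ s t : ℝ, 0 ≤ s → 0 ≤ t → c (s + t) = W.S t (c s) + c t := by
    intro s t hs ht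
    rw [hc, hc, hc, hgadd s t hs ht, hcoc s t hs ht, map_sub, W.S_fix t _ (hE0mem _)]
    abel
  have hcross : ∀ s t : ℝ, 0 ≤ s → 0 ≤ t → τ (star (W.S t (c s)) * c t) = 0 := by
    intro s t hs ht
    have hx : star (W.S t (c s)) ∈ W.alg (0 + (t : EReal)) ((s : EReal) + (t : EReal)) := by
      apply star_mem
      have : W.S t (c s) ∈ (W.S t) '' (W.alg 0 (s : EReal) : Set A) :=
        ⟨_, hcad s hs, rfl⟩
      rw [W.S_alg] at this
      exact this
    have hE : W.E 0 t (star (W.S t (c s))) = 0 := by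
      rw [← (W.E_condExp _ _).map_of_mem _ hx, W.indep, W.E0_condExp.map_star, W.E0_S, hc0,
        star_zero]
      rintro x ⟨⟨_, h1⟩, h2, _⟩
      rw [zero_add] at h2
      exact lt_asymm h1 h2
    have hb := (W.E_condExp 0 t).bimodule 1 (one_mem (W.alg 0 t)) (c t) (hcad t ht)
      (star (W.S t (c s)))
    rw [one_mul, one_mul, hE, zero_mul] at hb
    rw [← (W.E_condExp 0 t).trace_eq, hb, map_zero]
  have hcross' : ∀ s t : ℝ, 0 ≤ s → 0 ≤ t → τ (star (c t) * W.S t (c s)) = 0 := by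
    intro s t hs ht
    have hx : W.S t (c s) ∈ W.alg (0 + (t : EReal)) ((s : EReal) + (t : EReal)) := by
      have : W.S t (c s) ∈ (W.S t) '' (W.alg 0 (s : EReal) : Set A) :=
        ⟨_, hcad s hs, rfl⟩
      rw [W.S_alg] at this
      exact this
    have hE : W.E 0 t (W.S t (c s)) = 0 := by
      rw [← (W.E_condExp _ _).map_of_mem _ hx, W.indep, W.E0_S, hc0]
      rintro x ⟨⟨_, h1⟩, h2, _⟩
      rw [zero_add] at h2
      exact lt_asymm h1 h2
    have hb := (W.E_condExp 0 t).bimodule (star (c t)) (star_mem (hcad t ht))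
      1 (one_mem (W.alg 0 t)) (W.S t (c s))
    rw [mul_one, mul_one, hE, mul_zero] at hb
    rw [← (W.E_condExp 0 t).trace_eq, hb, map_zero]
  have hfadd : ∀ s t : ℝ, 0 ≤ s → 0 ≤ t →
      τ (star (c (s + t)) * c (s + t)) = τ (star (c s) * c s) + τ (star (c t) * c t) := by
    intro s t hs ht
    rw [hccoc s t hs ht, star_add, add_mul, mul_add, mul_add, map_add, map_add, map_add,
      hcross s t hs ht, hcross' s t hs ht, ← map_star, ← map_mul, W.S_trace]
    ring
  have hclim : Filter.Tendsto (fun t : ℝ => ((t : ℂ))⁻¹ • c t)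
      (nhdsWithin 0 (Set.Ioi 0)) (nhds (d' - W.E0 d')) := by
    have := hdiff.sub ((hE0c.tendsto d').comp hdiff)
    refine this.congr fun t => ?_
    simp [Function.comp, hc, smul_sub]
  have hf := additive_lin_aux (fun t => τ (star (c t) * c t)) hfadd 0 (by
    have hid : Filter.Tendsto (fun t : ℝ => t) (nhdsWithin 0 (Set.Ioi 0)) (nhds 0) :=
      tendsto_nhdsWithin_of_tendsto_nhds Filter.tendsto_id
    have h1 := hid.mul (hclim.norm.pow 2)
    rw [zero_mul] at h1
    refine squeeze_zero_norm' ?_ h1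
    filter_upwards [self_mem_nhdsWithin] with t ht
    have ht : 0 < t := ht
    have h2 := W.tracial.bounded (star (c t) * c t)
    rw [CStarRing.norm_star_mul_self] at h2
    rw [norm_smul, norm_smul, norm_inv, Complex.norm_real, Real.norm_of_nonneg ht.le]
    calc t⁻¹ * ‖τ (star (c t) * c t)‖ ≤ t⁻¹ * (‖c t‖ * ‖c t‖) := by gcongr
      _ = t * (t⁻¹ * ‖c t‖) ^ 2 := by field_simp)
  intro t ht
  have h1 : c t = 0 := W.tracial.faithful _ (by simpa using hf t ht)
  rw [hc, sub_eq_zero] at h1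
  rw [h1, hL]
  exact hg t ht
end

section
/- Let (A, τ, S, (A_I), (E_I)) be an A_0-valued white noise and let (c_t)_{t≥0} be a centred, norm-continuous additive cocycle for the shift S. Then for every t ≥ 0 and every partition 0 = s_0 < s_1 < … < s_n = t of [0, t], the conditional expectation of the discrete quadratic variation sum is exactly Σ_{j=0}^{n−1} E_0((c_{s_{j+1}} − c_{s_j})* (c_{s_{j+1}} − c_{s_j})) = t · E_0(c_1* c_1), independently of the partition. -/
open scoped ComplexOrder

/-- A continuous additive function on the half-line is linear. -/
theorem halfLine_linear_aux {A : Type*} [NormedAddCommGroup A] [NormedSpace ℝ A] (f : ℝ → A)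
    (hadd : ∀ s t : ℝ, 0 ≤ s → 0 ≤ t → f (s + t) = f s + f t)
    (hf : ContinuousOn f (Set.Ici 0)) (t : ℝ) (ht : 0 ≤ t) : f t = t • f 1 := by
  have h0 : f 0 = 0 := by simpa using hadd 0 0 le_rfl le_rfl
  have key : ∀ a b x : ℝ, 0 ≤ a → 0 ≤ b → a - b = x →
      f (max x 0) - f (max (-x) 0) = f a - f b := by
    intro a b x ha hb hx
    have h1 := hadd (max x 0) b (le_max_right _ _) hb
    have h2 := hadd a (max (-x) 0) ha (le_max_right _ _)
    have h3 : max x 0 + b = a + max (-x) 0 := by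
      rcases le_total x 0 with h | h
      · rw [max_eq_right h, max_eq_left (by linarith)]; linarith
      · rw [max_eq_left h, max_eq_right (by linarith)]; linarith
    rw [h3, h2] at h1
    rw [sub_eq_sub_iff_add_eq_add, ← h1]
  let g : ℝ →+ A :=
    { toFun := fun x => f (max x 0) - f (max (-x) 0)
      map_zero' := by simp
      map_add' := by
        intro x y
        rw [key (max x 0 + max y 0) (max (-x) 0 + max (-y) 0) (x + y) (by positivity)
          (by positivity) ?_, hadd _ _ (le_max_right _ _) (le_max_right _ _),
          hadd _ _ (le_max_right _ _) (le_max_right _ _)]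
        · abel
        · have e : ∀ z : ℝ, max z 0 - max (-z) 0 = z := by
            intro z
            rcases le_total z 0 with h | h
            · rw [max_eq_right h, max_eq_left (by linarith)]; linarith
            · rw [max_eq_left h, max_eq_right (by linarith)]; linarith
          have := e x
          have := e y
          linarith }
  have hg : Continuous g := by
    have c1 : Continuous fun x : ℝ => f (max x 0) :=
      hf.comp_continuous (by fun_prop) (fun x => Set.mem_Ici.mpr (le_max_right _ _))
    have c2 : Continuous fun x : ℝ => f (max (-x) 0) :=
      hf.comp_continuous (by fun_prop) (fun x => Set.mem_Ici.mpr (le_max_right _ _))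
    exact c1.sub c2
  have hgt : ∀ x : ℝ, 0 ≤ x → g x = f x := by
    intro x hx
    change f (max x 0) - f (max (-x) 0) = f x
    rw [max_eq_left hx, max_eq_right (by linarith), h0, sub_zero]
  have := map_real_smul g hg t 1
  rw [smul_eq_mul, mul_one, hgt t ht, hgt 1 zero_le_one] at this
  exact this

/-- The orthogonality of increments over adjacent intervals. -/
theorem whiteNoise_cross_aux {A : Type*} [CStarAlgebra A]
    {τ : A →ₗ[ℂ] ℂ} (W : WhiteNoise A τ) (a b d : EReal) (x y : A)
    (hx : x ∈ W.alg b d) (hy : y ∈ W.alg a b) (h0 : W.E0 x = 0) :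
    W.E0 (x * y) = 0 := by
  have hxE : W.E a b x = 0 := by
    rw [← (W.E_condExp b d).map_of_mem x hx, W.indep, h0]
    rintro r ⟨⟨-, h1⟩, h2, -⟩
    exact lt_asymm h1 h2
  rw [← W.tower a b]
  have := (W.E_condExp a b).bimodule 1 (one_mem _) y hy x
  rw [one_mul, hxE] at this
  rw [this]
  simp

/-- For a centred norm-continuous additive cocycle `c` and any partition
`0 = s_0 < … < s_n = t` of `[0, t]`, the conditional expectation of the discrete quadratic
variation sum equals `t • E₀(c_1* c_1)`, independently of the partition. -/
theorem condExp_discrete_quadratic_variation {A : Type*} [CStarAlgebra A]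
    (τ : A →ₗ[ℂ] ℂ) (W : WhiteNoise A τ) (c : ℝ → A)
    (hadapt : ∀ t : ℝ, 0 ≤ t → c t ∈ W.alg 0 (t : EReal))
    (hcoc : ∀ s t : ℝ, 0 ≤ s → 0 ≤ t → c (s + t) = W.S t (c s) + c t)
    (hcentred : ∀ t : ℝ, 0 ≤ t → W.E0 (c t) = 0)
    (hcont : ContinuousOn c (Set.Ici 0)) :
    ∀ t : ℝ, 0 ≤ t → ∀ (n : ℕ), 1 ≤ n → ∀ s : ℕ → ℝ,
      s 0 = 0 → s n = t → (∀ j < n, s j < s (j + 1)) →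
      ∑ j ∈ Finset.range n,
          W.E0 (star (c (s (j + 1)) - c (s j)) * (c (s (j + 1)) - c (s j))) =
        (t : ℂ) • W.E0 (star (c 1) * c 1) := by
  have hstar : ∀ x, W.E0 (star x) = star (W.E0 x) := W.E0_condExp.map_star
  have hSmem : ∀ s t : ℝ, 0 ≤ s → W.S t (c s) ∈ W.alg (t : EReal) ((s : EReal) + t) := by
    intro s t hs
    have : W.S t (c s) ∈ (W.S t) '' (W.alg 0 (s : EReal) : Set A) :=
      Set.mem_image_of_mem _ (hadapt s hs)
    rw [W.S_alg, zero_add] at this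
    exact this
  have hcross : ∀ s t : ℝ, 0 ≤ s → 0 ≤ t → W.E0 (star (W.S t (c s)) * c t) = 0 := by
    intro s t hs ht
    apply whiteNoise_cross_aux W 0 t ((s : EReal) + t) _ _ (star_mem (hSmem s t hs)) (hadapt t ht)
    rw [hstar, W.E0_S, hcentred s hs, star_zero]
  have hcross' : ∀ s t : ℝ, 0 ≤ s → 0 ≤ t → W.E0 (star (c t) * W.S t (c s)) = 0 := by
    intro s t hs ht
    have := congrArg star (hcross s t hs ht)
    rwa [← hstar, star_mul, star_star, star_zero] at this
  have hadd : ∀ s t : ℝ, 0 ≤ s → 0 ≤ t → W.E0 (star (c (s + t)) * c (s + t)) =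
      W.E0 (star (c s) * c s) + W.E0 (star (c t) * c t) := by
    intro s t hs ht
    have e : W.E0 (star (W.S t (c s)) * W.S t (c s)) = W.E0 (star (c s) * c s) := by
      rw [← map_star, ← map_mul, W.E0_S]
    rw [hcoc s t hs ht, star_add, add_mul, mul_add, mul_add, map_add, map_add, map_add,
      hcross s t hs ht, hcross' s t hs ht, e]
    abel
  have hE0 : Continuous W.E0 :=
    AddMonoidHomClass.continuous_of_bound W.E0 1 (fun x => by
      rw [one_mul]; exact W.E0_condExp.contractive x)
  have hlin : ∀ t : ℝ, 0 ≤ t →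
      W.E0 (star (c t) * c t) = t • W.E0 (star (c 1) * c 1) := by
    intro t ht
    exact halfLine_linear_aux (fun t => W.E0 (star (c t) * c t)) hadd
      (hE0.comp_continuousOn (hcont.star.mul hcont)) t ht
  intro t ht n hn s hs0 hsn hmono
  have hnn : ∀ j ≤ n, 0 ≤ s j := by
    intro j
    induction j with
    | zero => intro _; exact hs0.ge
    | succ k ih =>
      intro hk
      exact (ih (by omega)).trans (hmono k (by omega)).le
  have hterm : ∀ j ∈ Finset.range n,
      W.E0 (star (c (s (j + 1)) - c (s j)) * (c (s (j + 1)) - c (s j))) =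
        (s (j + 1) - s j) • W.E0 (star (c 1) * c 1) := by
    intro j hj
    have hj' : j < n := Finset.mem_range.mp hj
    have hd : 0 ≤ s (j + 1) - s j := sub_nonneg.mpr (hmono j hj').le
    have e := hcoc (s (j + 1) - s j) (s j) hd (hnn j hj'.le)
    rw [sub_add_cancel] at e
    rw [e, add_sub_cancel_right, ← map_star, ← map_mul, W.E0_S, hlin _ hd]
  rw [Finset.sum_congr rfl hterm, ← Finset.sum_smul, Finset.sum_range_sub, hs0, hsn, sub_zero,
    Complex.coe_smul]
end

section
/- Let (A, τ, S, (A_I), (E_I)) be an A_0-valued white noise and let (c_t)_{t≥0} be a centred, norm-continuous additive cocycle for the shift S. For a partition P = {0 = s_0 < s_1 < … < s_n = t} of [0, t] with mesh |P| = max_j (s_{j+1} − s_j), set Q_P := Σ_{j=0}^{n−1} (c_{s_{j+1}} − c_{s_j})* (c_{s_{j+1}} − c_{s_j}). Then the quadratic variation sums form a Cauchy net in the norm ‖x‖₁ = τ(|x|) as the mesh tends to 0: for every t > 0 and every ε > 0 there exists δ > 0 such that for any two partitions P, P' of [0, t] with |P| < δ and |P'| < δ one has τ(|Q_P − Q_{P'}|)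 < ε, where |y| = (y* y)^{1/2} is defined via the continuous functional calculus. -/
open scoped ComplexOrder

/-- An increasing enumeration whose range covers a given finite set of reals. -/
theorem exists_strictMono_cover (F : Finset ℝ) :
    ∃ r : ℕ → ℝ, StrictMono r ∧ ∀ x ∈ F, ∃ k, r k = x := by
  suffices h : ∃ (m : ℕ) (r : ℕ → ℝ), StrictMono r ∧ (∀ x ∈ F, ∃ k < m, r k = x) ∧
      ∀ k < m, r k ∈ F by
    obtain ⟨m, r, h1, h2, -⟩ := h
    exact ⟨r, h1, fun x hx => (h2 x hx).imp fun k hk => hk.2⟩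
  induction F using Finset.induction_on_max with
  | empty => exact ⟨0, fun n => n, Nat.strictMono_cast, by simp, by simp⟩
  | insert a F ha ih =>
    obtain ⟨m, r, h1, h2, h3⟩ := ih
    refine ⟨m + 1, fun l => if l < m then r l else a + ((l : ℝ) - m), ?_, ?_, ?_⟩
    · apply strictMono_nat_of_lt_succ
      intro l
      by_cases h : l + 1 < m
      · have h' : l < m := by omega
        simp only [h, h', if_true]
        exact h1 (Nat.lt_succ_self l)
      · by_cases h' : l < m
        · have : l + 1 = m := by omega
          have h4 := ha _ (h3 l h')
          simp only [h, h', if_true, if_false, this]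
          simpa using h4
        · simp only [h, h', if_false]
          push_cast
          linarith
    · intro x hx
      rcases Finset.mem_insert.1 hx with rfl | hx
      · exact ⟨m, by omega, by simp⟩
      · obtain ⟨k, hk, hk'⟩ := h2 x hx
        exact ⟨k, by omega, by simp [hk, hk']⟩
    · intro k hk
      by_cases h : k < m
      · simp only [h, if_true]
        exact Finset.mem_insert_of_mem (h3 k h)
      · have : k = m := by omega
        simp [this]

theorem tau_nonneg {A : Type*} [CStarAlgebra A] [PartialOrder A] [StarOrderedRing A]
    {τ : A →ₗ[ℂ] ℂ} (hτ : IsTracialState τ) {x : A} (hx : 0 ≤ x) : 0 ≤ τ x := by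
  obtain ⟨y, rfl⟩ := CStarAlgebra.nonneg_iff_eq_star_mul_self.1 hx
  exact hτ.pos y

theorem tau_conj_le {A : Type*} [CStarAlgebra A] [PartialOrder A] [StarOrderedRing A]
    {τ : A →ₗ[ℂ] ℂ} (hτ : IsTracialState τ) (g y : A) (w : ℝ) (hg : ‖g‖ ≤ w) :
    (τ (star (g * y) * (g * y))).re ≤ w ^ 2 * (τ (star y * y)).re := by
  have h1 : star (g * y) * (g * y) ≤ ‖star g * g‖ • (star y * y) := by
    have := CStarAlgebra.star_left_conjugate_le_norm_smul (a := y) (b := star g * g)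
      (IsSelfAdjoint.star_mul_self g)
    simpa [star_mul, mul_assoc] using this
  have h2 := tau_nonneg hτ (sub_nonneg.2 h1)
  have h3 := (Complex.le_def.1 h2).1
  have e : ‖star g * g‖ • (star y * y) = ((‖star g * g‖ : ℝ) : ℂ) • (star y * y) := by
    simp
  rw [e, map_sub, map_smul, smul_eq_mul, Complex.sub_re, Complex.re_ofReal_mul,
    CStarRing.norm_star_mul_self] at h3
  have h4 := (Complex.le_def.1 (hτ.pos y)).1
  simp only [Complex.zero_re] at h3 h4
  have h5 : ‖g‖ * ‖g‖ ≤ w ^ 2 := by nlinarith [norm_nonneg g]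
  nlinarith

/-- `‖x‖₁ ≤ ‖x‖₂`. -/
theorem tau_sqrt_sq_le {A : Type*} [CStarAlgebra A] [PartialOrder A] [StarOrderedRing A]
    {τ : A →ₗ[ℂ] ℂ} (hτ : IsTracialState τ) (D : A) :
    ‖τ (CFC.sqrt (star D * D))‖ ^ 2 ≤ (τ (star D * D)).re := by
  set h := CFC.sqrt (star D * D) with hh
  have hn : 0 ≤ h := CFC.sqrt_nonneg _
  have hsq : h * h = star D * D := CFC.sqrt_mul_sqrt_self _ (star_mul_self_nonneg D)
  have hsa : star h = h := (IsSelfAdjoint.of_nonneg hn).star_eq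
  have h0 := tau_nonneg hτ hn
  obtain ⟨m, hm0, hm⟩ : ∃ m : ℝ, 0 ≤ m ∧ τ h = m := by
    refine ⟨(τ h).re, (Complex.le_def.1 h0).1, ?_⟩
    apply Complex.ext
    · simp
    · simpa using (Complex.le_def.1 h0).2.symm
  have h1 := (Complex.le_def.1 (hτ.pos (h - (m : ℂ) • (1 : A)))).1
  have e : star (h - (m : ℂ) • (1 : A)) * (h - (m : ℂ) • (1 : A))
      = star D * D - (2 * m : ℂ) • h + (m ^ 2 : ℂ) • (1 : A) := by
    rw [star_sub, star_smul, star_one, hsa, ← hsq]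
    simp only [RCLike.star_def, Complex.conj_ofReal, sub_mul, mul_sub, smul_mul_assoc,
      mul_smul_comm, one_mul, mul_one, smul_sub, smul_smul]
    module
  rw [e, map_add, map_sub, map_smul, map_smul, hm, hτ.map_one] at h1
  rw [hm]
  have e2 : (τ (star D * D) - (2 * m : ℂ) • (m : ℂ) + (m ^ 2 : ℂ) • (1 : ℂ)).re
      = (τ (star D * D)).re - m ^ 2 := by
    simp [pow_two]
    ring
  rw [e2] at h1
  simp only [Complex.zero_re] at h1
  simp only [Complex.norm_real, Real.norm_eq_abs, sq_abs]
  linarith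

theorem tau_add_star_le {A : Type*} [CStarAlgebra A]
    {τ : A →ₗ[ℂ] ℂ} (hτ : IsTracialState τ) (G : A) :
    (τ (star (G + star G) * (G + star G))).re ≤ 4 * (τ (star G * G)).re := by
  have h1 := (Complex.le_def.1 (hτ.pos (G - star G))).1
  have e : star (G + star G) * (G + star G) =
      (2 : ℂ) • (star G * G) + (2 : ℂ) • (G * star G)
        - star (G - star G) * (G - star G) := by
    simp only [star_add, star_sub, star_star, two_smul]
    noncomm_ring
  rw [e, map_sub, map_add, map_smul, map_smul, hτ.tracial G (star G)]
  simp only [Complex.zero_re] at h1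
  simp only [smul_eq_mul, Complex.sub_re, Complex.add_re, Complex.mul_re, Complex.re_ofNat,
    Complex.im_ofNat, zero_mul, sub_zero]
  linarith

/-- Orthogonality of a centred future element to the past. -/
theorem tau_mul_future {A : Type*} [CStarAlgebra A] {τ : A →ₗ[ℂ] ℂ} (W : WhiteNoise A τ)
    {u v : ℝ} {a y : A} (ha : a ∈ W.alg 0 (u : EReal))
    (hy : y ∈ W.alg (u : EReal) (v : EReal)) (h0 : W.E0 y = 0) : τ (a * y) = 0 := by
  have h1 := (W.E_condExp 0 (u : EReal)).bimodule a ha 1 (one_mem _) y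
  have h2 : W.E 0 (u : EReal) y = 0 := by
    have h3 := W.indep 0 u u v (by
      rintro x ⟨⟨-, h⟩, ⟨h', -⟩⟩
      exact lt_asymm h h') y
    rw [(W.E_condExp u v).map_of_mem y hy, h0] at h3
    exact h3
  rw [← (W.E_condExp 0 (u : EReal)).trace_eq]
  simp only [mul_one, h2, mul_zero] at h1
  rw [h1, map_zero]

theorem tau_past_add {A : Type*} [CStarAlgebra A] {τ : A →ₗ[ℂ] ℂ} (W : WhiteNoise A τ)
    {u v : ℝ} {x g y : A} (hx : x ∈ W.alg 0 (u : EReal)) (hg : g ∈ W.alg 0 (u : EReal))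
    (hy : y ∈ W.alg (u : EReal) (v : EReal)) (h0 : W.E0 y = 0) :
    τ (star (x + g * y) * (x + g * y)) = τ (star x * x) + τ (star (g * y) * (g * y)) := by
  have h1 : τ (star x * g * y) = 0 := tau_mul_future W (mul_mem (star_mem hx) hg) hy h0
  have h2 : τ (star y * (star g * x)) = 0 := by
    rw [W.tracial.tracial]
    refine tau_mul_future W (mul_mem (star_mem hg) hx) (star_mem hy) ?_
    rw [W.E0_condExp.map_star, h0, star_zero]
  have e : star (x + g * y) * (x + g * y) = star x * x + star x * g * y +
      star y * (star g * x) + star (g * y) * (g * y) := by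
    simp only [star_add, star_mul]
    noncomm_ring
  rw [e, map_add, map_add, map_add, h1, h2]
  ring

section cocycle
variable {A : Type*} [CStarAlgebra A] {τ : A →ₗ[ℂ] ℂ} (W : WhiteNoise A τ) (c : ℝ → A)

theorem incr_mem
    (hadapt : ∀ t : ℝ, 0 ≤ t → c t ∈ W.alg 0 (t : EReal))
    (hcoc : ∀ s t : ℝ, 0 ≤ s → 0 ≤ t → c (s + t) = W.S t (c s) + c t)
    {u v : ℝ} (hu : 0 ≤ u) (huv : u ≤ v) : c v - c u ∈ W.alg (u : EReal) (v : EReal) := by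
  have h := hcoc (v - u) u (by linarith) hu
  rw [sub_add_cancel] at h
  have h2 : W.S u (c (v - u)) ∈ (W.S u) '' (W.alg 0 ((v - u : ℝ) : EReal) : Set A) :=
    ⟨_, hadapt _ (by linarith), rfl⟩
  rw [W.S_alg, zero_add, ← EReal.coe_add, sub_add_cancel] at h2
  rw [h, add_sub_cancel_right]
  exact h2

theorem incr_centred (hcentred : ∀ t : ℝ, 0 ≤ t → W.E0 (c t) = 0)
    {u v : ℝ} (hu : 0 ≤ u) (huv : u ≤ v) : W.E0 (c v - c u) = 0 := by
  rw [map_sub, hcentred _ hu, hcentred _ (hu.trans huv), sub_zero]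

/-- The `L²` estimate for discrete stochastic integrals. -/
theorem integral_bound [PartialOrder A] [StarOrderedRing A]
    (hadapt : ∀ t : ℝ, 0 ≤ t → c t ∈ W.alg 0 (t : EReal))
    (hcoc : ∀ s t : ℝ, 0 ≤ s → 0 ≤ t → c (s + t) = W.S t (c s) + c t)
    (hcentred : ∀ t : ℝ, 0 ≤ t → W.E0 (c t) = 0)
    (r : ℕ → ℝ) (hr : StrictMono r) (a : ℕ) (ha : 0 ≤ r a) (w : ℝ) (g : ℕ → A)
    (b : ℕ) (hab : a ≤ b)
    (hg : ∀ l, a ≤ l → l < b → g l ∈ W.alg 0 (r l : EReal))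
    (hgw : ∀ l, a ≤ l → l < b → ‖g l‖ ≤ w) :
    (∑ l ∈ Finset.Ico a b, g l * (c (r (l + 1)) - c (r l))) ∈ W.alg 0 (r b : EReal) ∧
    (τ (star (∑ l ∈ Finset.Ico a b, g l * (c (r (l + 1)) - c (r l))) *
      (∑ l ∈ Finset.Ico a b, g l * (c (r (l + 1)) - c (r l))))).re ≤
      w ^ 2 * (τ (star (c (r b) - c (r a)) * (c (r b) - c (r a)))).re := by
  induction b, hab using Nat.le_induction with
  | base => simp
  | succ b hab ih =>
    obtain ⟨ih1, ih2⟩ := ih (fun l h h' => hg l h (by omega)) (fun l h h' => hgw l h (by omega))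
    have hb0 : 0 ≤ r b := ha.trans (hr.monotone hab)
    have hbb : r b ≤ r (b + 1) := (hr (Nat.lt_succ_self b)).le
    have hy := incr_mem W c hadapt hcoc hb0 hbb
    have hy0 := incr_centred W c hcentred hb0 hbb
    have hgb := hg b hab (by omega)
    have mono1 : ∀ x ∈ W.alg 0 (r b : EReal), x ∈ W.alg 0 (r (b + 1) : EReal) :=
      fun x hx => W.alg_mono _ _ _ _ le_rfl (EReal.coe_le_coe_iff.2 hbb) hx
    have hy' : c (r (b + 1)) - c (r b) ∈ W.alg 0 (r (b + 1) : EReal) :=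
      W.alg_mono _ _ _ _ (by exact_mod_cast hb0) le_rfl hy
    have hX : c (r b) - c (r a) ∈ W.alg 0 (r b : EReal) :=
      W.alg_mono _ _ _ _ (by exact_mod_cast ha) le_rfl
        (incr_mem W c hadapt hcoc ha (hr.monotone hab))
    rw [Finset.sum_Ico_succ_top hab]
    refine ⟨add_mem (mono1 _ ih1) (mul_mem (mono1 _ hgb) hy'), ?_⟩
    rw [tau_past_add W ih1 hgb hy hy0]
    have e : c (r (b + 1)) - c (r a) = (c (r b) - c (r a)) + 1 * (c (r (b + 1)) - c (r b)) := by
      rw [one_mul]; abel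
    rw [e, tau_past_add W hX (one_mem _) hy hy0, one_mul, Complex.add_re, Complex.add_re, mul_add]
    exact add_le_add ih2 (tau_conj_le W.tracial _ _ _ (hgw b hab (by omega)))

end cocycle

/-- A Riemann sum over a partition rewritten over a refinement. -/
theorem refine_sum {A : Type*} [CStarAlgebra A] (c : ℝ → A) (r : ℕ → ℝ) (hr : StrictMono r)
    (δ : ℝ) (s : ℕ → ℝ) (φ : ℕ → ℕ) (n : ℕ) (hφ : ∀ j ≤ n, r (φ j) = s j)
    (hs : ∀ j < n, s j < s (j + 1)) (hδ : ∀ j < n, s (j + 1) - s j < δ) :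
    φ 0 ≤ φ n ∧ ∃ p : ℕ → ℝ,
      (∀ l, φ 0 ≤ l → l < φ n → s 0 ≤ p l ∧ p l ≤ r l ∧ r l < p l + δ) ∧
      ∑ j ∈ Finset.range n, star (c (s j)) * (c (s (j + 1)) - c (s j)) =
        ∑ l ∈ Finset.Ico (φ 0) (φ n), star (c (p l)) * (c (r (l + 1)) - c (r l)) := by
  induction n with
  | zero => exact ⟨le_rfl, fun _ => 0, fun l h h' => by omega, by simp⟩
  | succ n ih =>
    obtain ⟨h0, p, hp, hsum⟩ := ih (fun j hj => hφ j (by omega)) (fun j hj => hs j (by omega))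
      (fun j hj => hδ j (by omega))
    have hn := hφ n (by omega)
    have hn1 := hφ (n + 1) le_rfl
    have hlt : φ n < φ (n + 1) := by
      rw [← hr.lt_iff_lt, hn, hn1]; exact hs n (by omega)
    refine ⟨h0.trans hlt.le, fun l => if l < φ n then p l else s n, ?_, ?_⟩
    · intro l hl hl'
      by_cases h : l < φ n
      · simp only [h, if_true]
        exact hp l hl h
      · simp only [h, if_false]
        have h1 : r (φ n) ≤ r l := hr.monotone (by omega)
        have h2 : r l < r (φ (n + 1)) := hr hl'
        have h3 : r (φ 0) ≤ r (φ n) := hr.monotone h0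
        have h4 := hφ 0 (by omega)
        have h5 := hδ n (by omega)
        refine ⟨by linarith, by linarith, by linarith⟩
    · rw [Finset.sum_range_succ, hsum, ← Finset.sum_Ico_consecutive _ h0 hlt.le]
      congr 1
      · refine Finset.sum_congr rfl fun l hl => ?_
        simp [(Finset.mem_Ico.1 hl).2]
      · rw [← hn1, ← hn, ← Finset.sum_Ico_sub (fun l => c (r l)) hlt.le, Finset.mul_sum]
        refine Finset.sum_congr rfl fun l hl => ?_
        have : ¬ l < φ n := by have := (Finset.mem_Ico.1 hl).1; omega
        simp [this, hn]

theorem quad_sum_eq {A : Type*} [CStarAlgebra A] (c : ℝ → A) (s : ℕ → ℝ) (n : ℕ) :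
    ∑ j ∈ Finset.range n, star (c (s (j + 1)) - c (s j)) * (c (s (j + 1)) - c (s j)) =
      star (c (s n)) * c (s n) - star (c (s 0)) * c (s 0)
      - (∑ j ∈ Finset.range n, star (c (s j)) * (c (s (j + 1)) - c (s j)) +
        star (∑ j ∈ Finset.range n, star (c (s j)) * (c (s (j + 1)) - c (s j)))) := by
  induction n with
  | zero => simp
  | succ n ih =>
    rw [Finset.sum_range_succ, ih, Finset.sum_range_succ]
    simp only [star_add, star_mul, star_sub, star_star]
    noncomm_ring

/-- Existence of the quadratic variation as an `L¹`-Cauchy net: for a centred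
norm-continuous additive cocycle `c`, the discrete quadratic variation sums
`Q_P = Σ_j (c_{s_{j+1}} - c_{s_j})* (c_{s_{j+1}} - c_{s_j})` over partitions `P` of `[0, t]`
form a Cauchy net for the norm `‖x‖₁ = τ(|x|)` as the mesh tends to `0`. -/
theorem quadratic_variation_L1_cauchy {A : Type*} [CStarAlgebra A]
    [PartialOrder A] [StarOrderedRing A]
    (τ : A →ₗ[ℂ] ℂ) (W : WhiteNoise A τ) (c : ℝ → A)
    (hadapt : ∀ t : ℝ, 0 ≤ t → c t ∈ W.alg 0 (t : EReal))
    (hcoc : ∀ s t : ℝ, 0 ≤ s → 0 ≤ t → c (s + t) = W.S t (c s) + c t)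
    (hcentred : ∀ t : ℝ, 0 ≤ t → W.E0 (c t) = 0)
    (hcont : ContinuousOn c (Set.Ici 0)) :
    ∀ t : ℝ, 0 < t → ∀ ε : ℝ, 0 < ε → ∃ δ : ℝ, 0 < δ ∧
      ∀ (n n' : ℕ) (s s' : ℕ → ℝ),
        1 ≤ n → s 0 = 0 → s n = t → (∀ j < n, s j < s (j + 1)) →
          (∀ j < n, s (j + 1) - s j < δ) →
        1 ≤ n' → s' 0 = 0 → s' n' = t → (∀ j < n', s' j < s' (j + 1)) →
          (∀ j < n', s' (j + 1) - s' j < δ) →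
        ‖τ (CFC.sqrt
            (star ((∑ j ∈ Finset.range n,
                      star (c (s (j + 1)) - c (s j)) * (c (s (j + 1)) - c (s j))) -
                   (∑ j ∈ Finset.range n',
                      star (c (s' (j + 1)) - c (s' j)) * (c (s' (j + 1)) - c (s' j)))) *
                  ((∑ j ∈ Finset.range n,
                      star (c (s (j + 1)) - c (s j)) * (c (s (j + 1)) - c (s j))) -
                   (∑ j ∈ Finset.range n',
                      star (c (s' (j + 1)) - c (s' j)) * (c (s' (j + 1)) - c (s' j))))))‖
          < ε := by
  intro t ht ε hε
  set K : ℝ := (τ (star (c t - c 0) * (c t - c 0))).re with hK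
  have hK0 : 0 ≤ K := (Complex.le_def.1 (W.tracial.pos (c t - c 0))).1
  set w : ℝ := ε / (2 * (K + 1)) with hw
  have hw0 : 0 < w := by positivity
  have hwK : 4 * (w ^ 2 * K) < ε ^ 2 := by
    have h1 : 2 * w * (K + 1) = ε := by rw [hw]; field_simp
    rw [← h1]
    have : 0 < w ^ 2 := by positivity
    nlinarith
  have huc : UniformContinuousOn c (Set.Icc 0 t) :=
    isCompact_Icc.uniformContinuousOn_of_continuous
      (hcont.mono Set.Icc_subset_Ici_self)
  obtain ⟨δ, hδ, hδc⟩ := Metric.uniformContinuousOn_iff.1 huc w hw0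
  refine ⟨δ, hδ, ?_⟩
  intro n n' s s' hn hs0 hsn hs hsδ hn' hs0' hsn' hs' hsδ'
  obtain ⟨r, hr, hcov⟩ := exists_strictMono_cover
    ((Finset.range (n + 1)).image s ∪ (Finset.range (n' + 1)).image s')
  have h1 : ∀ j, ∃ k, j ≤ n → r k = s j := by
    intro j
    by_cases hj : j ≤ n
    · obtain ⟨k, hk⟩ := hcov (s j) (Finset.mem_union_left _
        (Finset.mem_image_of_mem _ (Finset.mem_range.2 (by omega))))
      exact ⟨k, fun _ => hk⟩
    · exact ⟨0, fun h => absurd h hj⟩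
  have h2 : ∀ j, ∃ k, j ≤ n' → r k = s' j := by
    intro j
    by_cases hj : j ≤ n'
    · obtain ⟨k, hk⟩ := hcov (s' j) (Finset.mem_union_right _
        (Finset.mem_image_of_mem _ (Finset.mem_range.2 (by omega))))
      exact ⟨k, fun _ => hk⟩
    · exact ⟨0, fun h => absurd h hj⟩
  choose φ hφ using h1
  choose ψ hψ using h2
  obtain ⟨hab, p, hp, hsum⟩ := refine_sum c r hr δ s φ n hφ hs hsδ
  obtain ⟨-, q, hq, hsum'⟩ := refine_sum c r hr δ s' ψ n' hψ hs' hsδ'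
  have e0 : ψ 0 = φ 0 := hr.injective (by rw [hφ 0 (by omega), hψ 0 (by omega), hs0, hs0'])
  have e1 : ψ n' = φ n := hr.injective (by rw [hφ n le_rfl, hψ n' le_rfl, hsn, hsn'])
  rw [e0, e1] at hq hsum'
  have ra : r (φ 0) = 0 := by rw [hφ 0 (by omega), hs0]
  have rb : r (φ n) = t := by rw [hφ n le_rfl, hsn]
  have hpa : ∀ l x, 0 ≤ x → x ≤ r l → star (c x) ∈ W.alg 0 (r l : EReal) := by
    intro l x hx hxl
    exact star_mem (W.alg_mono _ _ _ _ le_rfl (EReal.coe_le_coe_iff.2 hxl) (hadapt x hx))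
  obtain ⟨-, hB⟩ := integral_bound W c hadapt hcoc hcentred r hr (φ 0) ra.ge w
    (fun l => star (c (q l)) - star (c (p l))) (φ n) hab
    (by
      intro l hl hl'
      obtain ⟨a1, a2, a3⟩ := hp l hl hl'
      obtain ⟨b1, b2, b3⟩ := hq l hl hl'
      rw [hs0] at a1
      rw [hs0'] at b1
      exact sub_mem (hpa l _ b1 b2) (hpa l _ a1 a2))
    (by
      intro l hl hl'
      obtain ⟨a1, a2, a3⟩ := hp l hl hl'
      obtain ⟨b1, b2, b3⟩ := hq l hl hl'
      rw [hs0] at a1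
      rw [hs0'] at b1
      have hlt : r l < t := by rw [← rb]; exact hr hl'
      have := hδc (q l) ⟨b1, by linarith⟩ (p l) ⟨a1, by linarith⟩
        (by rw [Real.dist_eq, abs_lt]; constructor <;> linarith)
      rw [← star_sub, norm_star, ← dist_eq_norm]
      exact this.le)
  rw [ra, rb, ← hK] at hB
  simp only [sub_mul, Finset.sum_sub_distrib] at hB
  rw [← hsum, ← hsum'] at hB
  rw [quad_sum_eq, quad_sum_eq, hs0, hs0', hsn, hsn']
  set I := ∑ j ∈ Finset.range n, star (c (s j)) * (c (s (j + 1)) - c (s j))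
  set I' := ∑ j ∈ Finset.range n', star (c (s' j)) * (c (s' (j + 1)) - c (s' j))
  have e : star (c t) * c t - star (c 0) * c 0 - (I + star I)
      - (star (c t) * c t - star (c 0) * c 0 - (I' + star I')) = (I' - I) + star (I' - I) := by
    rw [star_sub]; abel
  rw [e]
  have f1 := tau_sqrt_sq_le W.tracial ((I' - I) + star (I' - I))
  have f2 := tau_add_star_le W.tracial (I' - I)
  refine lt_of_pow_lt_pow_left₀ 2 hε.le ?_
  linarith
end
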